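/- Gate-elimination inductive step: for every n ≥ 2 and every DeMorgan circuit C computing XOR_n or ¬XOR_n, there exist an index i ∈ {1,…,n}, a bit b ∈ {0,1}, and a DeMorgan circuit C' on the remaining n − 1 variables computing the restricted function (XOR_n with x_i fixed to b, which is XOR_{n−1} or ¬XOR_{n−1} of the remaining variables) such that size(C') ≤ size(C) − 3. Consequently CC(XOR_n) ≥ min(CC(XOR_{n−1}), CC(¬XOR_{n−1})) + 3 for all n ≥ 2. -/

import Mathlib

/-- A node (gate) of a DeMorgan circuit on `n` inputs: an input variable, a constant,
a negation of an earlier node, or a binary ∧/∨ of two earlier (ordered) nodes.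
Nodes are referenced by their position in the gate list. -/
inductive Gate (n : ℕ) : Type
  | inp : Fin n → Gate n
  | const : Bool → Gate n
  | not : ℕ → Gate n
  | and : ℕ → ℕ → Gate n
  | or : ℕ → ℕ → Gate n
deriving DecidableEq

/-- The (indices of the) nodes a gate reads from. -/
def Gate.refs {n : ℕ} : Gate n → List ℕ
  | .inp _ => []
  | .const _ => []
  | .not a => [a]
  | .and a b => [a, b]
  | .or a b => [a, b]

/-- A DeMorgan circuit on `n` inputs: a finite DAG of gates, presented as a list in
topological order (every gate only reads strictly earlier gates), with a designated
output node. -/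
structure Circuit (n : ℕ) : Type where
  gates : List (Gate n)
  output : Fin gates.length
  wf : ∀ (i : ℕ) (g : Gate n), gates[i]? = some g → ∀ r ∈ g.refs, r < i

/-- Value of a single gate, given the values `acc` of all earlier gates. -/
def Gate.val {n : ℕ} (x : Fin n → Bool) (acc : List Bool) : Gate n → Bool
  | .inp i => x i
  | .const b => b
  | .not a => !(acc.getD a false)
  | .and a b => acc.getD a false && acc.getD b false
  | .or a b => acc.getD a false || acc.getD b false

/-- The list of values of all gates of the circuit, in topological order. -/
def Circuit.evalList {n : ℕ} (C : Circuit n) (x : Fin n → Bool) : List Bool :=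
  C.gates.foldl (fun acc g => acc ++ [g.val x acc]) []

/-- The Boolean value computed by the circuit: the value of its output node. -/
def Circuit.eval {n : ℕ} (C : Circuit n) (x : Fin n → Bool) : Bool :=
  (C.evalList x).getD C.output false

/-- A gate is costly when it is a binary (∧/∨) gate; ¬ gates and constants are free. -/
def Gate.costly {n : ℕ} : Gate n → Bool
  | .and _ _ => true
  | .or _ _ => true
  | _ => false

/-- The size of a circuit: its number of binary (∧/∨) gates. -/
def Circuit.size {n : ℕ} (C : Circuit n) : ℕ := (C.gates.filter Gate.costly).length

/-- `C` computes the Boolean function `f`. -/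
def Circuit.Computes {n : ℕ} (C : Circuit n) (f : (Fin n → Bool) → Bool) : Prop :=
  ∀ x, C.eval x = f x

/-- The DeMorgan circuit complexity of `f`: the minimum number of binary gates of a
DeMorgan circuit computing `f`. -/
noncomputable def CC (n : ℕ) (f : (Fin n → Bool) → Bool) : ℕ :=
  sInf {s | ∃ C : Circuit n, C.Computes f ∧ C.size = s}

/-- The parity function `XOR_n(x) = (x_1 + ⋯ + x_n) mod 2`. -/
def XORf (n : ℕ) (x : Fin n → Bool) : Bool :=
  decide ((∑ i : Fin n, (if x i then 1 else 0)) % 2 = 1)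

/-!
Negations being free, a circuit is a straight-line program of conjunctions of signals, where a
signal is a constant, a literal or an earlier node, up to complement. Take a program for parity with
the fewest gates. Its first nontrivial node `g` is the conjunction of a literal of `x_i` and a
literal of `x_j` with `i ≠ j`. The variable `x_i` must feed a second gate `h`: otherwise falsifying
the literal of `x_j` would make the output independent of `x_i`. Fix `x_i` so that `g` becomes
constant; then `g` and `h` become free. If no third gate became free, no gate besides `g` and `h`
would read a signal that becomes constant, so replacing all nodes that become constant, apart from
the literals of `x_i`, by `⊥` would eliminate `g` and still compute parity,
contradicting minimality.
-/

namespace GateElimination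

/-! ### Equality up to complement -/

section EqOrCompl

variable {α : Type*} [BooleanAlgebra α] {u v w : α}

/-- Equality up to complementation in a Boolean algebra. Negations being free, two functions
related in this way are interchangeable as wires of a circuit. -/
def EqOrCompl (u v : α) : Prop := u = v ∨ u = vᶜ

namespace EqOrCompl

lemma refl (u : α) : EqOrCompl u u := Or.inl rfl

lemma symm (h : EqOrCompl u v) : EqOrCompl v u := by
  rcases h with rfl | rfl <;> simp [EqOrCompl]

lemma trans (huv : EqOrCompl u v) (hvw : EqOrCompl v w) : EqOrCompl u w := by
  rcases huv with rfl | rfl <;> rcases hvw with rfl | rfl <;> simp [EqOrCompl]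

lemma bot_inf (hu : EqOrCompl u ⊥) (v : α) : u ⊓ v = ⊥ ∨ u ⊓ v = v := by
  rcases hu with rfl | rfl <;> simp

lemma inf_bot_bot (hu : EqOrCompl u ⊥) (hv : EqOrCompl v ⊥) : EqOrCompl (u ⊓ v) ⊥ := by
  rcases hu.bot_inf v with h | h <;> rw [h]
  exacts [.refl _, hv]

lemma inf_eq_bot_or_left (hu : EqOrCompl u w) (hv : EqOrCompl v w) : u ⊓ v = ⊥ ∨ u ⊓ v = u := by
  rcases hu with rfl | rfl <;> rcases hv with rfl | rfl <;> simp

end EqOrCompl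

end EqOrCompl

/-! ### Boolean functions -/

/-- Boolean functions of `n` variables, a Boolean algebra under the pointwise operations. -/
abbrev BoolFun (n : ℕ) : Type := (Fin n → Bool) → Bool

/-- The projection `x ↦ x_i`. -/
def var {n : ℕ} (i : Fin n) : BoolFun n := fun x => x i

/-- The functions a circuit computes for free: constants and literals. -/
def IsTrivial {n : ℕ} (u : BoolFun n) : Prop := EqOrCompl u ⊥ ∨ ∃ i, EqOrCompl u (var i)

/-- The subfunction `u|_{x_i = b}` of the remaining variables. -/
def restrict {n : ℕ} (i : Fin (n + 1)) (b : Bool) (u : BoolFun (n + 1)) : BoolFun n :=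
  fun y => u (i.insertNth b y)

/-- Flipping any single input flips the output; only parity and its negation have this property. -/
def IsFullySensitive {n : ℕ} (f : BoolFun n) : Prop :=
  ∀ x i, f (Function.update x i (!x i)) = !f x

/-- On the set `S` of inputs, the value of `u` is unaffected by changing the variable `x_i`. -/
def IgnoresOn {n : ℕ} (i : Fin n) (S : Set (Fin n → Bool)) (u : BoolFun n) : Prop :=
  ∀ x ∈ S, ∀ z, u (Function.update x i z) = u x

section BoolFun

variable {n : ℕ} {u v f : BoolFun n} {i j : Fin n} {S : Set (Fin n → Bool)}

lemma IsTrivial.congr (hv : IsTrivial v) (huv : EqOrCompl u v) : IsTrivial u :=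
  hv.imp huv.trans fun ⟨i, hi⟩ => ⟨i, huv.trans hi⟩

lemma isTrivial_bot : IsTrivial (⊥ : BoolFun n) := Or.inl (.refl _)

lemma exists_ne_of_not_isTrivial_inf (hu : IsTrivial u) (hv : IsTrivial v)
    (huv : ¬ IsTrivial (u ⊓ v)) : ∃ i j, i ≠ j ∧ EqOrCompl u (var i) ∧ EqOrCompl v (var j) := by
  have left_not_const {u v : BoolFun n} (hv : IsTrivial v) (huv : ¬ IsTrivial (u ⊓ v)) :
      ¬ EqOrCompl u ⊥ := fun hu => huv <| by
    rcases hu.bot_inf v with h | h <;> rw [h]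
    exacts [isTrivial_bot, hv]
  obtain ⟨i, hi⟩ := hu.resolve_left (left_not_const hv huv)
  obtain ⟨j, hj⟩ := hv.resolve_left (left_not_const hu (inf_comm u v ▸ huv))
  refine ⟨i, j, ?_, hi, hj⟩
  rintro rfl
  refine huv ?_
  rcases hi.inf_eq_bot_or_left hj with h | h <;> rw [h]
  exacts [isTrivial_bot, hu]

lemma ignoresOn_bot : IgnoresOn i S ⊥ := fun _ _ _ => rfl

lemma ignoresOn_var (hij : j ≠ i) : IgnoresOn i S (var j) := fun x _ z => by
  simp [var, hij]

lemma IgnoresOn.inf (hu : IgnoresOn i S u) (hv : IgnoresOn i S v) : IgnoresOn i S (u ⊓ v) :=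
  fun x hx z => congrArg₂ (· ⊓ ·) (hu x hx z) (hv x hx z)

lemma IgnoresOn.congr (hv : IgnoresOn i S v) (huv : EqOrCompl u v) : IgnoresOn i S u := by
  rcases huv with rfl | rfl
  exacts [hv, fun x hx z => congrArg not (hv x hx z)]

lemma ignoresOn_of_le (huv : u ≤ v) (hv : IgnoresOn i {x | v x = false} v) :
    IgnoresOn i {x | v x = false} u := by
  have eq_false (x) (hx : v x = false) : u x = false := Bool.eq_false_of_le_false (hx ▸ huv x)
  intro x hx z
  rw [eq_false x hx, eq_false _ ((hv x hx z).trans hx)]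

lemma exists_eq_false_of_eqOrCompl_var (hu : EqOrCompl u (var i)) : ∃ x, u x = false := by
  rcases hu with rfl | rfl
  exacts [⟨fun _ => false, rfl⟩, ⟨fun _ => true, rfl⟩]

namespace IsFullySensitive

lemma compl (hf : IsFullySensitive f) : IsFullySensitive fᶜ := fun x i => congrArg not (hf x i)

lemma not_ignoresOn (hf : IsFullySensitive f) (hS : S.Nonempty) : ¬ IgnoresOn i S f := by
  obtain ⟨x, hx⟩ := hS
  intro h
  simpa [hf x i] using h x hx (!x i)

lemma not_eqOrCompl_bot (hf : IsFullySensitive f) (i : Fin n) : ¬ EqOrCompl f ⊥ := fun h =>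
  hf.not_ignoresOn Set.univ_nonempty (ignoresOn_bot.congr h : IgnoresOn i _ f)

lemma not_eqOrCompl_var [Nontrivial (Fin n)] (hf : IsFullySensitive f) (i : Fin n) :
    ¬ EqOrCompl f (var i) := by
  obtain ⟨j, hj⟩ := exists_ne i
  exact fun h => hf.not_ignoresOn Set.univ_nonempty ((ignoresOn_var hj.symm).congr h)

lemma not_isTrivial [Nontrivial (Fin n)] (hf : IsFullySensitive f) : ¬ IsTrivial f := by
  rintro (h | ⟨i, h⟩)
  · obtain ⟨i⟩ : Nonempty (Fin n) := inferInstance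
    exact hf.not_eqOrCompl_bot i h
  · exact hf.not_eqOrCompl_var i h

end IsFullySensitive

end BoolFun

section Restrict

variable {n : ℕ} {u v : BoolFun (n + 1)} {i : Fin (n + 1)} {b : Bool}

protected lemma EqOrCompl.restrict (h : EqOrCompl u v) :
    EqOrCompl (restrict i b u) (restrict i b v) := by
  rcases h with rfl | rfl
  exacts [.refl _, Or.inr rfl]

lemma restrict_var_self : EqOrCompl (restrict i b (var i)) ⊥ := by
  cases b
  · exact Or.inl (funext fun y => by simp [restrict, var])
  · exact Or.inr (funext fun y => by simp [restrict, var])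

protected lemma IsTrivial.restrict (hu : IsTrivial u) : IsTrivial (restrict i b u) := by
  obtain h | ⟨j, h⟩ := hu
  · exact Or.inl h.restrict
  · refine IsTrivial.congr ?_ h.restrict
    obtain rfl | hj := eq_or_ne j i
    · exact Or.inl restrict_var_self
    · obtain ⟨k, rfl⟩ := Fin.exists_succAbove_eq hj
      exact Or.inr ⟨k, Or.inl (funext fun y => by simp [restrict, var])⟩

lemma exists_restrict_eq_bot (hu : EqOrCompl u (var i)) : ∃ b, restrict i b u = ⊥ := by
  rcases hu with rfl | rfl
  · exact ⟨false, funext fun y => by simp [restrict, var]⟩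
  · exact ⟨true, funext fun y => by simp [restrict, var]⟩

protected lemma IsFullySensitive.restrict (hu : IsFullySensitive u) :
    IsFullySensitive (restrict i b u) := fun y k => by
  simpa only [restrict, Fin.insertNth_update, Fin.insertNth_apply_succAbove]
    using hu (i.insertNth b y) (i.succAbove k)

end Restrict

/-! ### Straight-line programs of conjunctions -/

/-- The functions available without a binary gate at time `t` of the straight-line program `F`:
constants, literals, and earlier nodes, each up to negation. -/
def Signal {n : ℕ} (F : ℕ → BoolFun n) (t : ℕ) (u : BoolFun n) : Prop :=
  IsTrivial u ∨ ∃ q < t, EqOrCompl u (F q)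

/-- Up to negation, the node `F t` is the conjunction of the signals `u` and `v`. By De Morgan's law
this covers disjunctions too, since signals are closed under negation. -/
structure IsGate {n : ℕ} (F : ℕ → BoolFun n) (t : ℕ) (u v : BoolFun n) : Prop where
  left : Signal F t u
  right : Signal F t v
  eqOrCompl_inf : EqOrCompl (F t) (u ⊓ v)

/-- `F` is a straight-line program whose binary gates are among the nodes in `T`. Removing a gate
means making its node a signal, so positions never shift; a program is infinite, but all nodes
outside the finite set `T` are free. -/
def IsProgram {n : ℕ} (F : ℕ → BoolFun n) (T : Finset ℕ) : Prop :=
  ∀ t, Signal F t (F t) ∨ t ∈ T ∧ ∃ u v, IsGate F t u v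

/-- `f` is a node of a straight-line program with at most `s` binary gates. -/
def ComputableWith {n : ℕ} (s : ℕ) (f : BoolFun n) : Prop :=
  ∃ (F : ℕ → BoolFun n) (T : Finset ℕ), IsProgram F T ∧ T.card ≤ s ∧ ∃ o, F o = f

section Program

variable {n m : ℕ} {F : ℕ → BoolFun n} {T A : Finset ℕ} {t : ℕ} {u v : BoolFun n}

lemma Signal.congr (hv : Signal F t v) (huv : EqOrCompl u v) : Signal F t u :=
  hv.imp (·.congr huv) fun ⟨q, hq, h⟩ => ⟨q, hq, huv.trans h⟩

lemma Signal.map {φ : BoolFun n → BoolFun m}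
    (hφ : ∀ {u v}, EqOrCompl u v → EqOrCompl (φ u) (φ v))
    (hφ' : ∀ {u}, IsTrivial u → IsTrivial (φ u)) (hu : Signal F t u) :
    Signal (φ ∘ F) t (φ u) :=
  hu.imp hφ' fun ⟨q, hq, h⟩ => ⟨q, hq, hφ h⟩

lemma Signal.isTrivial (hF : ∀ q < t, IsTrivial (F q)) (hu : Signal F t u) : IsTrivial u :=
  hu.elim id fun ⟨q, hq, h⟩ => (hF q hq).congr h

lemma IsGate.symm (h : IsGate F t u v) : IsGate F t v u :=
  ⟨h.right, h.left, inf_comm u v ▸ h.eqOrCompl_inf⟩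

lemma IsGate.signal_of_left_const (h : IsGate F t u v) (hu : EqOrCompl u ⊥) :
    Signal F t (F t) := by
  refine Signal.congr ?_ h.eqOrCompl_inf
  rcases hu.bot_inf v with huv | huv <;> rw [huv]
  exacts [Or.inl isTrivial_bot, h.right]

lemma IsProgram.sdiff (hF : IsProgram F T) (hA : ∀ t ∈ A, Signal F t (F t)) :
    IsProgram F (T \ A) := by
  intro t
  by_cases ht : t ∈ A
  · exact Or.inl (hA t ht)
  · exact (hF t).imp_right fun ⟨htT, hg⟩ => ⟨Finset.mem_sdiff.2 ⟨htT, ht⟩, hg⟩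

end Program

section RestrictProgram

variable {n : ℕ} {F : ℕ → BoolFun (n + 1)} {T : Finset ℕ} {t : ℕ} {u v : BoolFun (n + 1)}
  {i : Fin (n + 1)} {b : Bool}

protected lemma Signal.restrict (hu : Signal F t u) :
    Signal (restrict i b ∘ F) t (restrict i b u) :=
  hu.map EqOrCompl.restrict IsTrivial.restrict

protected lemma IsGate.restrict (h : IsGate F t u v) :
    IsGate (restrict i b ∘ F) t (restrict i b u) (restrict i b v) :=
  ⟨h.left.restrict, h.right.restrict, h.eqOrCompl_inf.restrict⟩

protected lemma IsProgram.restrict (hF : IsProgram F T) : IsProgram (restrict i b ∘ F) T := fun t =>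
  (hF t).imp Signal.restrict fun ⟨ht, _, _, hg⟩ => ⟨ht, _, _, hg.restrict⟩

end RestrictProgram

/-! ### Gate elimination -/

section Elimination

variable {n : ℕ} {F : ℕ → BoolFun n} {T : Finset ℕ} {o g t : ℕ} {i j : Fin n} {u v : BoolFun n}
  {S : Set (Fin n → Bool)}

lemma IsProgram.exists_first_gate (hF : IsProgram F T) (ho : ¬ IsTrivial (F o)) :
    ∃ g ∈ T, ¬ IsTrivial (F g) ∧ ∃ u v i j, EqOrCompl (F g) (u ⊓ v) ∧ i ≠ j ∧
      EqOrCompl u (var i) ∧ EqOrCompl v (var j) := by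
  classical
  have hex : ∃ t, ¬ IsTrivial (F t) := ⟨o, ho⟩
  have hg := Nat.find_spec hex
  have earlier_trivial : ∀ q < Nat.find hex, IsTrivial (F q) := fun q hq =>
    not_not.1 (Nat.find_min hex hq)
  obtain hs | ⟨hgT, u, v, huv⟩ := hF (Nat.find hex)
  · exact absurd (hs.isTrivial earlier_trivial) hg
  · obtain ⟨i, j, hij⟩ := exists_ne_of_not_isTrivial_inf (huv.left.isTrivial earlier_trivial)
      (huv.right.isTrivial earlier_trivial) fun h => hg (h.congr huv.eqOrCompl_inf)
    exact ⟨_, hgT, hg, u, v, i, j, huv.eqOrCompl_inf, hij⟩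

lemma Signal.eqOrCompl_var_or_ignoresOn
    (hF : ∀ q < t, EqOrCompl (F q) (var i) ∨ IgnoresOn i S (F q)) (hv : Signal F t v) :
    EqOrCompl v (var i) ∨ IgnoresOn i S v := by
  obtain (h | ⟨j, h⟩) | ⟨q, hq, h⟩ := hv
  · exact Or.inr (ignoresOn_bot.congr h)
  · obtain rfl | hj := eq_or_ne j i
    exacts [Or.inl h, Or.inr ((ignoresOn_var hj).congr h)]
  · exact (hF q hq).imp h.trans (·.congr h)

/-- If `x_i` fed only the gate `g`, then falsifying the literal `v` of `x_j` would make the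
output independent of `x_i`. -/
lemma IsProgram.exists_second_gate (hF : IsProgram F T)
    (ho : IsFullySensitive (F o)) (hg : EqOrCompl (F g) (u ⊓ v)) (hv : EqOrCompl v (var j))
    (hij : i ≠ j) :
    ∃ h ∈ T, h ≠ g ∧ ∃ p q, IsGate F h p q ∧ EqOrCompl p (var i) := by
  by_contra! hcon
  have node_ignores (t) : EqOrCompl (F t) (var i) ∨ IgnoresOn i {x | v x = false} (F t) := by
    induction t using Nat.strong_induction_on with
    | _ t ih =>
    obtain rfl | htg := eq_or_ne t g
    · exact Or.inr ((ignoresOn_of_le inf_le_right ((ignoresOn_var hij.symm).congr hv)).congr hg)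
    obtain hs | ⟨htT, p, q, hpq⟩ := hF t
    · exact hs.eqOrCompl_var_or_ignoresOn ih
    · have hp := (hpq.left.eqOrCompl_var_or_ignoresOn ih).resolve_left (hcon t htT htg p q hpq)
      have hq := (hpq.right.eqOrCompl_var_or_ignoresOn ih).resolve_left
        (hcon t htT htg q p hpq.symm)
      exact Or.inr ((hp.inf hq).congr hpq.eqOrCompl_inf)
  have : Nontrivial (Fin n) := nontrivial_of_ne i j hij
  exact ho.not_ignoresOn (exists_eq_false_of_eqOrCompl_var hv)
    ((node_ignores o).resolve_left (ho.not_eqOrCompl_var i))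

end Elimination

section Collapse

variable {n : ℕ} {F : ℕ → BoolFun (n + 1)} {T : Finset ℕ} {g h t : ℕ} {u v : BoolFun (n + 1)}
  {i : Fin (n + 1)} {b : Bool}

open Classical in
/-- Replaces a function by `⊥` if it becomes constant under `x_i = b`, unless it is a literal of
`x_i`. -/
noncomputable def collapse (i : Fin (n + 1)) (b : Bool) (u : BoolFun (n + 1)) : BoolFun (n + 1) :=
  if EqOrCompl (restrict i b u) ⊥ ∧ ¬ EqOrCompl u (var i) then ⊥ else u

lemma collapse_of_const (hu : EqOrCompl (restrict i b u) ⊥) (hi : ¬ EqOrCompl u (var i)) :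
    collapse i b u = ⊥ := if_pos ⟨hu, hi⟩

lemma collapse_of_not_const (hu : ¬ EqOrCompl (restrict i b u) ⊥) : collapse i b u = u :=
  if_neg fun h => hu h.1

lemma collapse_of_literal (hu : EqOrCompl u (var i)) : collapse i b u = u :=
  if_neg fun h => h.2 hu

lemma collapse_eq_bot_or_self (u : BoolFun (n + 1)) : collapse i b u = ⊥ ∨ collapse i b u = u :=
  open Classical in ite_eq_or_eq _ _ _

protected lemma EqOrCompl.collapse (huv : EqOrCompl u v) :
    EqOrCompl (collapse i b u) (collapse i b v) := by
  by_cases hv : EqOrCompl (restrict i b v) ⊥ ∧ ¬ EqOrCompl v (var i)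
  · rw [collapse_of_const hv.1 hv.2,
      collapse_of_const (huv.restrict.trans hv.1) fun hu => hv.2 (huv.symm.trans hu)]
    exact .refl _
  · have hu : ¬ (EqOrCompl (restrict i b u) ⊥ ∧ ¬ EqOrCompl u (var i)) :=
      fun hu => hv ⟨huv.symm.restrict.trans hu.1, fun h => hu.2 (huv.trans h)⟩
    simpa only [collapse, if_neg hu, if_neg hv] using huv

protected lemma IsTrivial.collapse (hu : IsTrivial u) : IsTrivial (collapse i b u) := by
  rcases collapse_eq_bot_or_self (i := i) (b := b) u with h | h <;> rw [h]
  exacts [isTrivial_bot, hu]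

protected lemma Signal.collapse (hu : Signal F t u) :
    Signal (collapse i b ∘ F) t (collapse i b u) :=
  hu.map EqOrCompl.collapse IsTrivial.collapse

protected lemma IsGate.collapse (huv : IsGate F t u v) (hu : collapse i b u = u)
    (hv : collapse i b v = v) (ht : collapse i b (F t) = F t) : IsGate (collapse i b ∘ F) t u v :=
  ⟨hu ▸ huv.left.collapse, hv ▸ huv.right.collapse,
    EqOrCompl.trans (Or.inl ht) huv.eqOrCompl_inf⟩

/-- If `h` reads `x_i` together with a wire that dies under `x_i = b`, then `h` dies as well. -/
lemma IsGate.signal_or_collapse (hh : IsGate F h u v) (hu : EqOrCompl u (var i)) :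
    Signal (collapse i b ∘ F) h (collapse i b (F h)) ∨
      IsGate (collapse i b ∘ F) h u v := by
  obtain hbot | hself := collapse_eq_bot_or_self (i := i) (b := b) (F h)
  · exact Or.inl (Or.inl (hbot ▸ isTrivial_bot))
  by_cases hv : EqOrCompl (restrict i b v) ⊥ ∧ ¬ EqOrCompl v (var i)
  · by_cases hhi : EqOrCompl (F h) (var i)
    · exact Or.inl (Or.inl (IsTrivial.collapse (Or.inr ⟨i, hhi⟩)))
    · have hconst : EqOrCompl (restrict i b (F h)) ⊥ :=
        hh.eqOrCompl_inf.restrict.trans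
          ((hu.restrict.trans restrict_var_self).inf_bot_bot hv.1)
      exact Or.inl (Or.inl (collapse_of_const hconst hhi ▸ isTrivial_bot))
  · exact Or.inr (hh.collapse (collapse_of_literal hu) (if_neg hv) hself)

protected lemma IsProgram.collapse (hF : IsProgram F T) (hhT : h ∈ T) (hhg : h ≠ g)
    (hg : EqOrCompl (restrict i b (F g)) ⊥) (hgi : ¬ EqOrCompl (F g) (var i))
    (hh : IsGate F h u v) (hu : EqOrCompl u (var i))
    (honly : ∀ t ∈ T, t ≠ g → t ≠ h →
      ¬ Signal (restrict i b ∘ F) t (restrict i b (F t))) :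
    IsProgram (collapse i b ∘ F) (T.erase g) := by
  intro t
  obtain rfl | htg := eq_or_ne t g
  · exact Or.inl (Or.inl (by simpa [collapse_of_const hg hgi] using isTrivial_bot))
  obtain rfl | hth := eq_or_ne t h
  · exact (hh.signal_or_collapse hu).imp_right fun hg =>
      ⟨Finset.mem_erase.2 ⟨hhg, hhT⟩, _, _, hg⟩
  obtain hs | ⟨htT, p, q, hpq⟩ := hF t
  · exact Or.inl hs.collapse
  obtain hbot | hself := collapse_eq_bot_or_self (i := i) (b := b) (F t)
  · exact Or.inl (Or.inl (by simpa [hbot] using isTrivial_bot))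
  have hp : ¬ EqOrCompl (restrict i b p) ⊥ := fun hp =>
    honly t htT htg hth (hpq.restrict.signal_of_left_const hp)
  have hq : ¬ EqOrCompl (restrict i b q) ⊥ := fun hq =>
    honly t htT htg hth (hpq.symm.restrict.signal_of_left_const hq)
  exact Or.inr ⟨Finset.mem_erase.2 ⟨htg, htT⟩, p, q,
    hpq.collapse (collapse_of_not_const hp) (collapse_of_not_const hq) hself⟩

/-- Otherwise `collapse` would turn `F` into a program for the same output without the gate `g`. -/
lemma IsProgram.exists_third_gate {f : BoolFun (n + 1)} {o : ℕ} (hF : IsProgram F T)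
    (hmin : ∀ s < T.card, ¬ ComputableWith s f) (ho : F o = f)
    (hf : ¬ EqOrCompl (restrict i b f) ⊥) (hgT : g ∈ T) (hhT : h ∈ T) (hhg : h ≠ g)
    (hg : EqOrCompl (restrict i b (F g)) ⊥) (hgi : ¬ EqOrCompl (F g) (var i))
    (hh : IsGate F h u v) (hu : EqOrCompl u (var i)) :
    ∃ t ∈ T, t ≠ g ∧ t ≠ h ∧
      Signal (restrict i b ∘ F) t (restrict i b (F t)) := by
  by_contra! honly
  refine hmin _ (Finset.card_erase_lt_of_mem hgT) ⟨collapse i b ∘ F, T.erase g,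
    hF.collapse hhT hhg hg hgi hh hu honly, le_rfl, o, ?_⟩
  exact (congrArg _ ho).trans (collapse_of_not_const hf)

end Collapse

section EliminationStep

variable {n s : ℕ} {f : BoolFun (n + 2)}

lemma IsProgram.exists_restrict_of_minimal {F : ℕ → BoolFun (n + 2)} {T : Finset ℕ} {o : ℕ}
    (hf : IsFullySensitive f) (hF : IsProgram F T) (ho : F o = f)
    (hmin : ∀ s < T.card, ¬ ComputableWith s f) :
    ∃ i b s', s' + 3 ≤ T.card ∧ ComputableWith s' (restrict i b f) := by
  obtain ⟨g, hgT, hgtriv, u, v, i, j, hguv, hij, hui, hvj⟩ :=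
    hF.exists_first_gate (ho ▸ hf.not_isTrivial)
  obtain ⟨h, hhT, hhg, p, q, hpq, hpi⟩ :=
    hF.exists_second_gate (ho ▸ hf) hguv hvj hij
  obtain ⟨b, hb⟩ := exists_restrict_eq_bot hui
  have hg : EqOrCompl (restrict i b (F g)) ⊥ :=
    hguv.restrict.trans (Or.inl ((congrArg (· ⊓ restrict i b v) hb).trans (bot_inf_eq _)))
  obtain ⟨t, htT, htg, hth, ht⟩ := hF.exists_third_gate hmin ho
    (hf.restrict.not_eqOrCompl_bot 0) hgT hhT hhg hg (fun hgi => hgtriv (Or.inr ⟨i, hgi⟩)) hpq hpi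
  have freed : ∀ k ∈ ({g, h, t} : Finset ℕ), Signal (restrict i b ∘ F) k (restrict i b (F k)) := by
    simp only [Finset.forall_mem_insert, Finset.mem_singleton, forall_eq]
    exact ⟨Or.inl (Or.inl hg),
      hpq.restrict.signal_of_left_const (hpi.restrict.trans restrict_var_self), ht⟩
  refine ⟨i, b, _, ?_, _, _, hF.restrict.sdiff freed, le_rfl, o, congrArg _ ho⟩
  have hsub : ({g, h, t} : Finset ℕ) ⊆ T := by simp [Finset.insert_subset_iff, hgT, hhT, htT]
  have hcard : ({g, h, t} : Finset ℕ).card = 3 :=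
    Finset.card_eq_three.2 ⟨g, h, t, hhg.symm, htg.symm, hth.symm, rfl⟩
  rw [← hcard, Finset.card_sdiff_add_card_eq_card hsub]

theorem ComputableWith.exists_restrict (hf : IsFullySensitive f) (h : ComputableWith s f) :
    ∃ i b s', s' + 3 ≤ s ∧ ComputableWith s' (restrict i b f) := by
  classical
  have hex : ∃ s, ComputableWith s f := ⟨s, h⟩
  obtain ⟨F, T, hF, hT, o, ho⟩ := Nat.find_spec hex
  obtain ⟨i, b, s', hs', hc⟩ := hF.exists_restrict_of_minimal hf ho fun k hk =>
    Nat.find_min hex (hk.trans_le hT)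
  exact ⟨i, b, s', (hs'.trans hT).trans (Nat.find_min' hex h), hc⟩

end EliminationStep

/-! ### Gate lists -/

/-- The gate list of a circuit: every gate reads only strictly earlier nodes. -/
def WellFormed {n : ℕ} (L : List (Gate n)) : Prop :=
  ∀ (i : ℕ) (g : Gate n), L[i]? = some g → ∀ r ∈ g.refs, r < i

/-- The values of all nodes of a gate list, as in `Circuit.evalList`. -/
def evalGates {n : ℕ} (L : List (Gate n)) (x : Fin n → Bool) : List Bool :=
  L.foldl (fun acc g => acc ++ [g.val x acc]) []

/-- The function computed at position `v`, with junk value `⊥` beyond the end of the list. -/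
def nodeFun {n : ℕ} (L : List (Gate n)) (v : ℕ) : BoolFun n :=
  fun x => (evalGates L x).getD v false

/-- The function `u` is computed at some position of the gate list `L`. -/
def IsNode {n : ℕ} (L : List (Gate n)) (u : BoolFun n) : Prop := ∃ v < L.length, nodeFun L v = u

/-- The number of binary gates of a gate list, as in `Circuit.size`. -/
def numBinary {n : ℕ} (L : List (Gate n)) : ℕ := (L.filter Gate.costly).length

/-- At most `k` further binary gates suffice to compute `u` after the gate list `L`. -/
def ExtendsTo {n : ℕ} (L : List (Gate n)) (k : ℕ) (u : BoolFun n) : Prop :=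
  ∃ L', L <+: L' ∧ WellFormed L' ∧ numBinary L' ≤ numBinary L + k ∧ IsNode L' u

section GateList

variable {n k l v : ℕ} {L L' : List (Gate n)} {g : Gate n} {u w : BoolFun n} {x : Fin n → Bool}

lemma val_congr {A B : List Bool} (h : ∀ r ∈ g.refs, A.getD r false = B.getD r false) :
    g.val x A = g.val x B := by
  cases g <;> simp_all [Gate.val, Gate.refs]

lemma evalGates_concat : evalGates (L ++ [g]) x = evalGates L x ++ [g.val x (evalGates L x)] := by
  simp [evalGates]

lemma length_evalGates : (evalGates L x).length = L.length := by
  induction L using List.reverseRecOn with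
  | nil => rfl
  | append_singleton L g ih => simp [evalGates_concat, ih]

lemma evalGates_prefix (h : L <+: L') : evalGates L x <+: evalGates L' x := by
  obtain ⟨M, rfl⟩ := h
  induction M using List.reverseRecOn with
  | nil => simp
  | append_singleton M g ih =>
    rw [← List.append_assoc, evalGates_concat]
    exact ih.trans (List.prefix_append _ _)

lemma nodeFun_of_prefix (h : L <+: L') (hv : v < L.length) : nodeFun L' v = nodeFun L v := by
  funext x
  obtain ⟨M, hM⟩ := evalGates_prefix (x := x) h
  simp only [nodeFun, ← hM]
  exact List.getD_append _ _ _ _ (length_evalGates.symm ▸ hv)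

lemma nodeFun_concat_length : nodeFun (L ++ [g]) L.length = fun x => g.val x (evalGates L x) := by
  funext x
  simp [nodeFun, evalGates_concat, length_evalGates]

lemma nodeFun_eq_val (hL : WellFormed L) (hv : v < L.length) :
    nodeFun L v = fun x => L[v].val x (evalGates L x) := by
  have htake : L.take v ++ [L[v]] <+: L := by simpa using List.take_prefix (v + 1) L
  have hlen : (L.take v).length = v := List.length_take_of_le hv.le
  calc nodeFun L v = nodeFun (L.take v ++ [L[v]]) (L.take v).length := by
        rw [hlen, nodeFun_of_prefix htake (by simp [hv])]
    _ = fun x => L[v].val x (evalGates (L.take v) x) := nodeFun_concat_length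
    _ = fun x => L[v].val x (evalGates L x) := by
        funext x
        refine val_congr fun r hr => ?_
        have hrv : r < (L.take v).length := hlen.symm ▸ hL v _ (List.getElem?_eq_getElem hv) r hr
        exact congrFun (nodeFun_of_prefix (List.take_prefix v L) hrv).symm x

lemma WellFormed.concat (hL : WellFormed L) (hg : ∀ r ∈ g.refs, r < L.length) :
    WellFormed (L ++ [g]) := by
  intro i g' hi
  obtain hlt | rfl | hgt := lt_trichotomy i L.length
  · exact hL i g' (List.getElem?_append_left hlt ▸ hi)
  · rw [List.getElem?_concat_length, Option.some_inj] at hi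
    exact hi ▸ hg
  · simp [List.getElem?_eq_none (l := L ++ [g]) (i := i) (by simpa using hgt)] at hi

lemma IsNode.of_prefix (hu : IsNode L u) (h : L <+: L') : IsNode L' u := by
  obtain ⟨v, hv, rfl⟩ := hu
  exact ⟨v, hv.trans_le h.length_le, nodeFun_of_prefix h hv⟩

lemma IsNode.extendsTo (hL : WellFormed L) (hu : IsNode L u) : ExtendsTo L 0 u :=
  ⟨L, List.prefix_rfl, hL, le_rfl, hu⟩

lemma extendsTo_val (hL : WellFormed L) (hg : ∀ r ∈ g.refs, r < L.length) :
    ExtendsTo L (numBinary [g]) fun x => g.val x (evalGates L x) :=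
  ⟨L ++ [g], List.prefix_append _ _, hL.concat hg, by simp [numBinary], L.length, by simp,
    nodeFun_concat_length⟩

lemma extendsTo_bot (hL : WellFormed L) : ExtendsTo L 0 ⊥ :=
  extendsTo_val (g := .const false) hL (by simp [Gate.refs])

lemma extendsTo_var (hL : WellFormed L) (i : Fin n) : ExtendsTo L 0 (var i) :=
  extendsTo_val (g := .inp i) hL (by simp [Gate.refs])

namespace ExtendsTo

lemma trans_prefix (h : L <+: L') (hk : numBinary L' ≤ numBinary L + k) (hu : ExtendsTo L' l u) :
    ExtendsTo L (k + l) u := by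
  obtain ⟨M, hM, hwf, hl, hu⟩ := hu
  exact ⟨M, h.trans hM, hwf, by lia, hu⟩

lemma compl (hu : ExtendsTo L k u) : ExtendsTo L k uᶜ := by
  obtain ⟨L', hL', hwf, hk, v, hv, rfl⟩ := hu
  exact trans_prefix hL' hk (extendsTo_val (g := .not v) hwf (by simpa [Gate.refs] using hv))

lemma congr (hw : ExtendsTo L k w) (huw : EqOrCompl u w) : ExtendsTo L k u := by
  rcases huw with rfl | rfl
  exacts [hw, hw.compl]

lemma inf (hu : ExtendsTo L k u)
    (hw : ∀ ⦃L'⦄, L <+: L' → WellFormed L' → ExtendsTo L' l w) :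
    ExtendsTo L (k + l + 1) (u ⊓ w) := by
  obtain ⟨L₁, hL₁, hwf₁, hk, hu⟩ := hu
  obtain ⟨L₂, hL₂, hwf₂, hl, b, hb, rfl⟩ := hw hL₁ hwf₁
  obtain ⟨a, ha, rfl⟩ := hu.of_prefix hL₂
  exact trans_prefix (hL₁.trans hL₂) (by lia)
    (extendsTo_val (g := .and a b) hwf₂ (by simp [Gate.refs, ha, hb]))

end ExtendsTo

end GateList

/-! ### Circuits and straight-line programs -/

section Realization

variable {n s t : ℕ} {F : ℕ → BoolFun n} {T : Finset ℕ} {f u : BoolFun n} {L : List (Gate n)}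

lemma Signal.extendsTo (hL : WellFormed L) (hF : ∀ q < t, IsNode L (F q)) (hu : Signal F t u) :
    ExtendsTo L 0 u := by
  obtain (h | ⟨i, h⟩) | ⟨q, hq, h⟩ := hu
  · exact (extendsTo_bot hL).congr h
  · exact (extendsTo_var hL i).congr h
  · exact ((hF q hq).extendsTo hL).congr h

lemma IsGate.extendsTo {v : BoolFun n} (hL : WellFormed L) (hF : ∀ q < t, IsNode L (F q))
    (h : IsGate F t u v) : ExtendsTo L 1 (F t) := by
  have hinf : ExtendsTo L 1 (u ⊓ v) := (h.left.extendsTo hL hF).inf fun L' hLL' hL' =>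
    h.right.extendsTo hL' fun q hq => (hF q hq).of_prefix hLL'
  exact hinf.congr h.eqOrCompl_inf

lemma IsProgram.exists_gateList (hF : IsProgram F T) (N : ℕ) :
    ∃ L, WellFormed L ∧ (∀ t < N, IsNode L (F t)) ∧ numBinary L ≤ Nat.count (· ∈ T) N := by
  induction N with
  | zero => exact ⟨[], by simp [WellFormed], by simp, by simp [numBinary]⟩
  | succ N ih =>
    obtain ⟨L, hL, hnode, hnum⟩ := ih
    obtain ⟨L', hLL', hL', hnum', hN⟩ : ExtendsTo L (if N ∈ T then 1 else 0) (F N) := by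
      obtain hs | ⟨hNT, u, v, hg⟩ := hF N
      · obtain ⟨L', hLL', hL', hnum', hN⟩ := hs.extendsTo hL hnode
        exact ⟨L', hLL', hL', by lia, hN⟩
      · simpa only [if_pos hNT] using hg.extendsTo hL hnode
    refine ⟨L', hL', fun t ht => ?_, by rw [Nat.count_succ]; lia⟩
    obtain h | rfl := Nat.lt_succ_iff_lt_or_eq.1 ht
    exacts [(hnode t h).of_prefix hLL', hN]

lemma ComputableWith.exists_circuit (h : ComputableWith s f) :
    ∃ C : Circuit n, C.Computes f ∧ C.size ≤ s := by
  obtain ⟨F, T, hF, hT, o, rfl⟩ := h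
  obtain ⟨L, hL, hnode, hnum⟩ := hF.exists_gateList (o + 1)
  obtain ⟨v, hv, hval⟩ := hnode o (Nat.lt_succ_self o)
  have hcount : Nat.count (· ∈ T) (o + 1) ≤ T.card := by
    rw [Nat.count_eq_card_filter_range]
    exact Finset.card_le_card fun t ht => (Finset.mem_filter.1 ht).2
  exact ⟨⟨L, ⟨v, hv⟩, hL⟩, congrFun hval, hnum.trans (hcount.trans hT)⟩

/-- The positions of the binary gates of a gate list. -/
def binaryPositions (L : List (Gate n)) : Finset ℕ :=
  (Finset.univ.filter fun v : Fin L.length => (L.get v).costly).map Fin.valEmbedding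

lemma card_binaryPositions (L : List (Gate n)) : (binaryPositions L).card = numBinary L := by
  conv_rhs => rw [numBinary, ← List.map_get_finRange L, List.filter_map, List.length_map]
  simp [binaryPositions, Finset.card, Fin.univ_def, Function.comp_def]

lemma mem_binaryPositions (ht : t < L.length) (h : L[t].costly) : t ∈ binaryPositions L :=
  Finset.mem_map.2 ⟨⟨t, ht⟩, by simpa using h, rfl⟩

lemma WellFormed.isProgram (hL : WellFormed L) : IsProgram (nodeFun L) (binaryPositions L) := by
  intro t
  obtain ht | ht := le_or_gt L.length t
  · have hbot : nodeFun L t = ⊥ :=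
      funext fun x => List.getD_eq_default _ _ (length_evalGates.trans_le ht)
    exact Or.inl (Or.inl (hbot ▸ isTrivial_bot))
  have refs_lt := hL t _ (List.getElem?_eq_getElem ht)
  have hval := nodeFun_eq_val hL ht
  have hmem := mem_binaryPositions ht
  have earlier {q} (hq : q < t) : Signal (nodeFun L) t (nodeFun L q) := Or.inr ⟨q, hq, .refl _⟩
  generalize L[t] = g at refs_lt hval hmem
  cases g with
  | inp i => exact Or.inl (Or.inl (Or.inr ⟨i, Or.inl hval⟩))
  | const b =>
    refine Or.inl (Or.inl (Or.inl ?_))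
    cases b
    exacts [Or.inl hval, Or.inr hval]
  | not a => exact Or.inl (Or.inr ⟨a, refs_lt a (by simp [Gate.refs]), Or.inr hval⟩)
  | and a b =>
    have ha := earlier (refs_lt a (by simp [Gate.refs]))
    have hb := earlier (refs_lt b (by simp [Gate.refs]))
    exact Or.inr ⟨hmem rfl, _, _, ha, hb, Or.inl hval⟩
  | or a b =>
    have ha := earlier (refs_lt a (by simp [Gate.refs]))
    have hb := earlier (refs_lt b (by simp [Gate.refs]))
    have hor : nodeFun L t = ((nodeFun L a)ᶜ ⊓ (nodeFun L b)ᶜ)ᶜ := by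
      rw [compl_inf, compl_compl, compl_compl]
      exact hval
    exact Or.inr ⟨hmem rfl, _, _, ha.congr (Or.inr rfl), hb.congr (Or.inr rfl), Or.inr hor⟩

lemma computableWith_size_eval (C : Circuit n) : ComputableWith C.size C.eval :=
  ⟨nodeFun C.gates, binaryPositions C.gates, WellFormed.isProgram C.wf,
    (card_binaryPositions C.gates).le, C.output, rfl⟩

end Realization

lemma IsFullySensitive.exists_circuit_restrict {n : ℕ} {C : Circuit (n + 2)}
    (hC : IsFullySensitive C.eval) :
    ∃ i b, ∃ C' : Circuit (n + 1), C'.Computes (restrict i b C.eval) ∧ C'.size + 3 ≤ C.size := by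
  obtain ⟨i, b, s, hs, h⟩ := (computableWith_size_eval C).exists_restrict hC
  obtain ⟨C', hC', hsize⟩ := h.exists_circuit
  exact ⟨i, b, C', hC', by lia⟩

/-! ### Circuit complexity -/

section Complexity

variable {n : ℕ} {f g : BoolFun n}

/-- The function `f` can be computed after any gate list, at a bounded cost. Unlike the existence of
a circuit, this passes to conjunctions without merging two circuits. -/
def Definable (f : BoolFun n) : Prop := ∃ k, ∀ ⦃L⦄, WellFormed L → ExtendsTo L k f

lemma definable_bot : Definable (⊥ : BoolFun n) := ⟨0, fun _ hL => extendsTo_bot hL⟩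

lemma definable_var (i : Fin n) : Definable (var i) := ⟨0, fun _ hL => extendsTo_var hL i⟩

namespace Definable

lemma compl (hf : Definable f) : Definable fᶜ := hf.imp fun _ h _ hL => (h hL).compl

lemma inf (hf : Definable f) (hg : Definable g) : Definable (f ⊓ g) := by
  obtain ⟨k, hk⟩ := hf
  obtain ⟨l, hl⟩ := hg
  exact ⟨k + l + 1, fun L hL => (hk hL).inf fun L' _ hL' => hl hL'⟩

lemma sup (hf : Definable f) (hg : Definable g) : Definable (f ⊔ g) := by
  simpa only [compl_inf, compl_compl] using (hf.compl.inf hg.compl).compl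

lemma finset_inf {ι : Type*} {s : Finset ι} {u : ι → BoolFun n} (hu : ∀ a ∈ s, Definable (u a)) :
    Definable (s.inf u) :=
  Finset.inf_induction (compl_bot (α := BoolFun n) ▸ definable_bot.compl) (fun _ h _ => h.inf) hu

lemma finset_sup {ι : Type*} {s : Finset ι} {u : ι → BoolFun n} (hu : ∀ a ∈ s, Definable (u a)) :
    Definable (s.sup u) :=
  Finset.sup_induction definable_bot (fun _ h _ => h.sup) hu

end Definable

/-- The literal of `x_i` that is true at the input `a`. -/
def literalAt (a : Fin n → Bool) (i : Fin n) : BoolFun n := if a i then var i else (var i)ᶜ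

lemma definable_literalAt (a : Fin n → Bool) (i : Fin n) : Definable (literalAt a i) := by
  unfold literalAt
  split_ifs
  exacts [definable_var i, (definable_var i).compl]

lemma literalAt_eq_true {a x : Fin n → Bool} {i : Fin n} : literalAt a i x = true ↔ x i = a i := by
  cases h : a i <;> simp [literalAt, h, var]

lemma inf_literalAt_eq_true {a x : Fin n → Bool} :
    Finset.univ.inf (literalAt a) x = true ↔ x = a := by
  rw [Finset.inf_apply, ← top_eq_true, Finset.inf_eq_top_iff]
  simp only [top_eq_true, Finset.mem_univ, forall_const, literalAt_eq_true, funext_iff]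

lemma eq_sup_inf_literalAt (f : BoolFun n) :
    f = (Finset.univ.filter (f · = true)).sup fun a => Finset.univ.inf (literalAt a) := by
  funext x
  rw [Bool.eq_iff_iff, ← not_iff_not, Finset.sup_apply, Bool.not_eq_true, Bool.not_eq_true,
    ← bot_eq_false, Finset.sup_eq_bot_iff]
  simp only [bot_eq_false, ← Bool.not_eq_true, Finset.mem_filter, Finset.mem_univ, true_and,
    inf_literalAt_eq_true]
  exact ⟨fun hx a ha hxa => hx (hxa ▸ ha), fun h hx => h x hx rfl⟩

lemma definable (f : BoolFun n) : Definable f := by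
  rw [eq_sup_inf_literalAt f]
  exact .finset_sup fun a _ => .finset_inf fun i _ => definable_literalAt a i

lemma exists_circuit_computes (f : BoolFun n) : ∃ C : Circuit n, C.Computes f := by
  obtain ⟨k, hk⟩ := definable f
  obtain ⟨L, -, hL, -, v, hv, hval⟩ := hk (L := []) (by simp [WellFormed])
  exact ⟨⟨L, ⟨v, hv⟩, hL⟩, congrFun hval⟩

lemma CC_le_size {C : Circuit n} (hC : C.Computes f) : CC n f ≤ C.size := Nat.sInf_le ⟨C, hC, rfl⟩

lemma exists_circuit_size_eq_CC (f : BoolFun n) :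
    ∃ C : Circuit n, C.Computes f ∧ C.size = CC n f := by
  obtain ⟨C, hC⟩ := exists_circuit_computes f
  have hne : {s | ∃ C : Circuit n, C.Computes f ∧ C.size = s}.Nonempty := ⟨_, C, hC, rfl⟩
  exact Nat.sInf_mem hne

end Complexity

/-! ### Parity -/

lemma XORf_insertNth {n : ℕ} (i : Fin (n + 1)) (b : Bool) (y : Fin n → Bool) :
    XORf (n + 1) (i.insertNth b y) = (b ^^ XORf n y) := by
  simp only [XORf, Fin.sum_univ_succAbove _ i, Fin.insertNth_apply_same,
    Fin.insertNth_apply_succAbove]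
  cases b
  · simp
  · grind

lemma isFullySensitive_XORf (n : ℕ) : IsFullySensitive (XORf n) := by
  intro x i
  cases n with
  | zero => exact i.elim0
  | succ n =>
    obtain ⟨b, y, rfl⟩ : ∃ b y, x = i.insertNth b y := ⟨_, _, (i.insertNth_self_removeNth x).symm⟩
    simp [XORf_insertNth]

end GateElimination

open GateElimination

/-- Gate-elimination inductive step: for `n = m + 1 ≥ 2`, every DeMorgan
circuit `C` computing `XOR_n` or `¬XOR_n` admits an index `i`, a bit `b`, and a circuit
`C'` on the remaining `m = n - 1` variables computing the restriction of the function
computed by `C` under `x_i := b` (which is `XOR_{n-1}` or `¬XOR_{n-1}`), with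
`size(C') ≤ size(C) - 3`.  Consequently
`CC(XOR_n) ≥ min(CC(XOR_{n-1}), CC(¬XOR_{n-1})) + 3`. -/
theorem gate_elimination_step :
    ∀ m : ℕ, 1 ≤ m →
      (∀ C : Circuit (m + 1),
        (C.Computes (XORf (m + 1)) ∨ C.Computes (fun x => !(XORf (m + 1) x))) →
        ∃ (i : Fin (m + 1)) (b : Bool) (C' : Circuit m),
          (∀ y : Fin m → Bool, C'.eval y = C.eval (i.insertNth b y)) ∧
          C'.size + 3 ≤ C.size) ∧
      min (CC m (XORf m)) (CC m (fun y => !(XORf m y))) + 3 ≤ CC (m + 1) (XORf (m + 1)) := by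
  intro m hm
  obtain ⟨k, rfl⟩ := Nat.exists_eq_add_of_le' hm
  have eliminate (C : Circuit (k + 2))
      (hC : C.Computes (XORf (k + 2)) ∨ C.Computes fun x => !XORf (k + 2) x) :
      ∃ i b, ∃ C' : Circuit (k + 1),
        C'.Computes (restrict i b C.eval) ∧ C'.size + 3 ≤ C.size := by
    apply IsFullySensitive.exists_circuit_restrict
    rcases hC with hC | hC <;> rw [funext hC]
    exacts [isFullySensitive_XORf _, (isFullySensitive_XORf _).compl]
  refine ⟨eliminate, ?_⟩
  obtain ⟨C, hC, hsize⟩ := exists_circuit_size_eq_CC (XORf (k + 2))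
  obtain ⟨i, b, C', hC', hsize'⟩ := eliminate C (Or.inl hC)
  have hparity (y) : C'.eval y = (b ^^ XORf (k + 1) y) := by
    rw [hC', funext hC, restrict, XORf_insertNth]
  rw [← hsize]
  refine le_trans (Nat.add_le_add_right ?_ 3) hsize'
  cases b
  · exact min_le_of_left_le (CC_le_size fun y => by simp [hparity])
  · exact min_le_of_right_le (CC_le_size fun y => by simp [hparity])
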